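/- arXiv:1808.10587 — 6 statements merged into one kernel-verified Lean document; each statement's English description precedes it below -/
import Mathlib

section
/- Let (u₀, u₁) and (v₀, v₁) be unit dual vectors with corresponding lines L_u = {u₀ × u₁ + t·u₀ : t ∈ ℝ} and L_v = {v₀ × v₁ + t·v₀ : t ∈ ℝ}. Then the lines L_u and L_v intersect perpendicularly (i.e., L_u ∩ L_v ≠ ∅ and ⟪u₀, v₀⟫ = 0) if and only if ⟪u₀, v₀⟫ = 0 and ⟪u₀, v₁⟫ + ⟪u₁, v₀⟫ = 0 (i.e., the dual inner product of the two unit dual vectors vanishes). -/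
noncomputable section
open scoped RealInnerProductSpace

/-- Euclidean 3-space `ℝ³`. -/
abbrev E3 : Type := EuclideanSpace ℝ (Fin 3)

/-- The cross product on `E3`. -/
def cross (u v : E3) : E3 :=
  (WithLp.equiv 2 (Fin 3 → ℝ)).symm
    ![u 1 * v 2 - u 2 * v 1, u 2 * v 0 - u 0 * v 2, u 0 * v 1 - u 1 * v 0]

theorem aux_zero (a b c x y z p q r : ℝ) (h1 : a*a+b*b+c*c = 1) (h2 : x*x+y*y+z*z = 1)
    (h3 : a*x+b*y+c*z = 0) (ha : p*a+q*b+r*c = 0) (hx : p*x+q*y+r*z = 0)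
    (hw : p*(b*z-c*y)+q*(c*x-a*z)+r*(a*y-b*x) = 0) : p = 0 ∧ q = 0 ∧ r = 0 := by
  have hn : (b*z-c*y)^2+(c*x-a*z)^2+(a*y-b*x)^2 = 1 := by
    linear_combination (x*x+y*y+z*z)*h1 + h2 - (a*x+b*y+c*z)*h3
  have k1 : q*(a*y-b*x) - r*(c*x-a*z) = 0 := by linear_combination a*hx - x*ha
  have k2 : r*(b*z-c*y) - p*(a*y-b*x) = 0 := by linear_combination b*hx - y*ha
  have k3 : p*(c*x-a*z) - q*(b*z-c*y) = 0 := by linear_combination c*hx - z*ha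
  refine ⟨?_, ?_, ?_⟩
  · linear_combination (-p)*hn + (b*z-c*y)*hw + (c*x-a*z)*k3 - (a*y-b*x)*k2
  · linear_combination (-q)*hn + (c*x-a*z)*hw + (a*y-b*x)*k1 - (b*z-c*y)*k3
  · linear_combination (-r)*hn + (a*y-b*x)*hw + (b*z-c*y)*k2 - (c*x-a*z)*k1

/-- Two oriented lines, given by unit dual vectors `(u₀, u₁)` and `(v₀, v₁)`, intersect
perpendicularly if and only if the dual inner product of the two unit dual vectors vanishes,
i.e. `⟪u₀,v₀⟫ = 0` and `⟪u₀,v₁⟫ + ⟪u₁,v₀⟫ = 0`. -/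
theorem lines_perp_intersect_iff_dual_inner_eq_zero (u₀ u₁ v₀ v₁ : E3)
    (hu₀ : ‖u₀‖ = 1) (hu₁ : ⟪u₀, u₁⟫ = 0)
    (hv₀ : ‖v₀‖ = 1) (hv₁ : ⟪v₀, v₁⟫ = 0) :
    ((∃ p : E3, (∃ t : ℝ, p = cross u₀ u₁ + t • u₀) ∧ (∃ t : ℝ, p = cross v₀ v₁ + t • v₀)) ∧
        ⟪u₀, v₀⟫ = 0) ↔
      (⟪u₀, v₀⟫ = 0 ∧ ⟪u₀, v₁⟫ + ⟪u₁, v₀⟫ = 0) := by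
  have hu : ⟪u₀, u₀⟫ = 1 := by rw [real_inner_self_eq_norm_sq, hu₀]; norm_num
  have hv : ⟪v₀, v₀⟫ = 1 := by rw [real_inner_self_eq_norm_sq, hv₀]; norm_num
  clear hu₀ hv₀
  have key : ∀ s t : ℝ, cross u₀ u₁ + t • u₀ = cross v₀ v₁ + s • v₀ ↔
      ((u₀ 1 * u₁ 2 - u₀ 2 * u₁ 1 + t * u₀ 0 = v₀ 1 * v₁ 2 - v₀ 2 * v₁ 1 + s * v₀ 0) ∧
       (u₀ 2 * u₁ 0 - u₀ 0 * u₁ 2 + t * u₀ 1 = v₀ 2 * v₁ 0 - v₀ 0 * v₁ 2 + s * v₀ 1) ∧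
       (u₀ 0 * u₁ 1 - u₀ 1 * u₁ 0 + t * u₀ 2 = v₀ 0 * v₁ 1 - v₀ 1 * v₁ 0 + s * v₀ 2)) := by
    intro s t
    constructor
    · intro h
      exact ⟨by simpa [cross] using congrArg (fun w : E3 => w 0) h,
        by simpa [cross] using congrArg (fun w : E3 => w 1) h,
        by simpa [cross] using congrArg (fun w : E3 => w 2) h⟩
    · rintro ⟨h0, h1, h2⟩
      ext i
      fin_cases i
      · simpa [cross] using h0
      · simpa [cross] using h1
      · simpa [cross] using h2
  have hin : ∀ x y : E3, ⟪x, y⟫ = x 0 * y 0 + x 1 * y 1 + x 2 * y 2 := by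
    intro x y
    simp [PiLp.inner_apply, Fin.sum_univ_three]
    ring
  simp only [hin] at *
  generalize u₀ 0 = a at *
  generalize u₀ 1 = b at *
  generalize u₀ 2 = c at *
  generalize v₀ 0 = x at *
  generalize v₀ 1 = y at *
  generalize v₀ 2 = z at *
  generalize u₁ 0 = d at *
  generalize u₁ 1 = e at *
  generalize u₁ 2 = f at *
  generalize v₁ 0 = k at *
  generalize v₁ 1 = l at *
  generalize v₁ 2 = m at *
  constructor
  · rintro ⟨⟨p, ⟨t, rfl⟩, s, h⟩, h3⟩
    obtain ⟨e0, e1, e2⟩ := (key s t).1 h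
    refine ⟨h3, ?_⟩
    -- dot the equation with the cross product of the directions
    have e : d*x+e*y+f*z + (a*k+b*l+c*m) = 0 := by
      linear_combination (b*z-c*y)*e0+(c*x-a*z)*e1+(a*y-b*x)*e2 - (d*x+e*y+f*z)*hu
        + (a*x+b*y+c*z)*hu₁ - (a*k+b*l+c*m)*hv + (a*x+b*y+c*z)*hv₁
    linear_combination e
  · rintro ⟨h3, h4⟩
    refine ⟨⟨_, ⟨a*(y*m-z*l)+b*(z*k-x*m)+c*(x*l-y*k), rfl⟩,
      x*(b*f-c*e)+y*(c*d-a*f)+z*(a*e-b*d), (key _ _).2 ?_⟩, h3⟩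
    set t := a*(y*m-z*l)+b*(z*k-x*m)+c*(x*l-y*k) with ht
    set s := x*(b*f-c*e)+y*(c*d-a*f)+z*(a*e-b*d) with hs
    obtain ⟨q0, q1, q2⟩ := aux_zero a b c x y z
      (b*f-c*e+t*a-(y*m-z*l+s*x)) (c*d-a*f+t*b-(z*k-x*m+s*y)) (a*e-b*d+t*c-(x*l-y*k+s*z))
      hu hv h3
      (by linear_combination t*hu - s*h3 + ht)
      (by linear_combination t*h3 - s*hv - hs)
      (by linear_combination h4 + (d*x+e*y+f*z)*hu
        - (a*x+b*y+c*z)*hu₁ + (a*k+b*l+c*m)*hv - (a*x+b*y+c*z)*hv₁)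
    exact ⟨by linear_combination q0, by linear_combination q1, by linear_combination q2⟩
end
end

section
/- (Dual Frenet formula.) Under the standing hypotheses, for all s ∈ I: v₀'(s) = n₀(s) and v₁'(s) = κ₁(s)·n₀(s) + n₁(s); n₀'(s) = −v₀(s) + τ₀(s)·t₀(s) and n₁'(s) = −κ₁(s)·v₀(s) − v₁(s) + τ₀(s)·t₁(s) + τ₁(s)·t₀(s); t₀'(s) = −τ₀(s)·n₀(s) and t₁'(s) = −τ₀(s)·n₁(s) − τ₁(s)·n₀(s). (These are the real and ε-components of the Frenet formula v̌' = κ̌ ň, ň' = −κ̌ v̌ + τ̌ ť, ť' = −τ̌ ň for the dual frame with κ̌ = 1 + ε κ₁, τ̌ = τ₀ + ε τ₁.) -/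
noncomputable section
open scoped RealInnerProductSpace

/-- Determinant of the 3×3 matrix with columns `u`, `v`, `w`. -/
def det3 (u v w : E3) : ℝ :=
  Matrix.det !![u 0, v 0, w 0; u 1, v 1, w 1; u 2, v 2, w 2]

namespace Ruled

/-- The director curve `e = v₀`. -/
def e (v₀ : ℝ → E3) : ℝ → E3 := v₀

/-- The base curve `r = v₀ × v₁`. -/
def r (v₀ v₁ : ℝ → E3) : ℝ → E3 := fun s => cross (v₀ s) (v₁ s)

/-- The parametrization `F(s,t) = r(s) + t • e(s)` of the ruled surface. -/
def F (v₀ v₁ : ℝ → E3) (s t : ℝ) : E3 := r v₀ v₁ s + t • v₀ s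

/-- `n₀ = v₀'`. -/
def n₀ (v₀ : ℝ → E3) : ℝ → E3 := fun s => deriv v₀ s

/-- `κ₁ = ⟪v₀', v₁'⟫`, the ε-part of the dual curvature. -/
def κ₁ (v₀ v₁ : ℝ → E3) : ℝ → ℝ := fun s => ⟪deriv v₀ s, deriv v₁ s⟫

/-- `n₁ = v₁' - κ₁ • v₀'`. -/
def n₁ (v₀ v₁ : ℝ → E3) : ℝ → E3 := fun s => deriv v₁ s - κ₁ v₀ v₁ s • deriv v₀ s

/-- `t₀ = v₀ × n₀`. -/
def t₀ (v₀ : ℝ → E3) : ℝ → E3 := fun s => cross (v₀ s) (n₀ v₀ s)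

/-- `t₁ = v₀ × n₁ + v₁ × n₀`. -/
def t₁ (v₀ v₁ : ℝ → E3) : ℝ → E3 :=
  fun s => cross (v₀ s) (n₁ v₀ v₁ s) + cross (v₁ s) (n₀ v₀ s)

/-- `τ₀ = ⟪n₀', t₀⟫`, the real part of the dual torsion. -/
def τ₀ (v₀ : ℝ → E3) : ℝ → ℝ := fun s => ⟪deriv (n₀ v₀) s, t₀ v₀ s⟫

/-- `τ₁ = ⟪n₀', t₁⟫ + ⟪n₁', t₀⟫`, the ε-part of the dual torsion. -/
def τ₁ (v₀ v₁ : ℝ → E3) : ℝ → ℝ :=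
  fun s => ⟪deriv (n₀ v₀) s, t₁ v₀ v₁ s⟫ + ⟪deriv (n₁ v₀ v₁) s, t₀ v₀ s⟫

/-- The striction curve `σ(s) = r(s) - ⟪r'(s), e'(s)⟫ • e(s)`. -/
def strict (v₀ v₁ : ℝ → E3) : ℝ → E3 :=
  fun s => r v₀ v₁ s - ⟪deriv (r v₀ v₁) s, deriv (e v₀) s⟫ • e v₀ s

end Ruled

open Ruled

theorem hasDerivAt_euclidean {f : ℝ → E3} {f' : E3} {s : ℝ} :
    HasDerivAt f f' s ↔ ∀ i, HasDerivAt (fun s => f s i) (f' i) s := by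
  constructor
  · intro h i
    exact ((EuclideanSpace.proj i : E3 →L[ℝ] ℝ).hasFDerivAt.comp_hasDerivAt s h)
  · intro h
    have h2 : HasDerivAt (fun s => WithLp.ofLp (f s)) (WithLp.ofLp f') s := hasDerivAt_pi.2 h
    exact ((EuclideanSpace.equiv (Fin 3) ℝ).symm.hasFDerivAt.comp_hasDerivAt s h2)

theorem inner3 (u v : E3) : ⟪u, v⟫ = u 0 * v 0 + u 1 * v 1 + u 2 * v 2 := by
  simp [PiLp.inner_apply, Fin.sum_univ_three]; ring
theorem cross0 (u v : E3) : cross u v 0 = u 1 * v 2 - u 2 * v 1 := rfl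
theorem cross1 (u v : E3) : cross u v 1 = u 2 * v 0 - u 0 * v 2 := rfl
theorem cross2 (u v : E3) : cross u v 2 = u 0 * v 1 - u 1 * v 0 := rfl
theorem ext3 {u v : E3} (h0 : u 0 = v 0) (h1 : u 1 = v 1) (h2 : u 2 = v 2) : u = v := by
  ext i; fin_cases i <;> assumption

theorem cross_addr (u v w : E3) : cross u (v + w) = cross u v + cross u w := by
  apply ext3 <;> simp [cross0, cross1, cross2] <;> ring
theorem cross_addl (u v w : E3) : cross (v + w) u = cross v u + cross w u := by
  apply ext3 <;> simp [cross0, cross1, cross2] <;> ring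
theorem cross_smulr (c : ℝ) (u v : E3) : cross u (c • v) = c • cross u v := by
  apply ext3 <;> simp [cross0, cross1, cross2] <;> ring
theorem cross_smull (c : ℝ) (u v : E3) : cross (c • u) v = c • cross u v := by
  apply ext3 <;> simp [cross0, cross1, cross2] <;> ring
theorem cross_self3 (u : E3) : cross u u = 0 := by
  apply ext3 <;> simp [cross0, cross1, cross2] <;> ring
theorem cross_anti (u v : E3) : cross u v = - cross v u := by
  apply ext3 <;> simp [cross0, cross1, cross2] <;> ring
theorem cross_negr (u v : E3) : cross u (-v) = - cross u v := by
  apply ext3 <;> simp [cross0, cross1, cross2] <;> ring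
theorem cross_cross3 (u v w : E3) : cross u (cross v w) = ⟪u, w⟫ • v - ⟪u, v⟫ • w := by
  apply ext3 <;> simp [cross0, cross1, cross2, inner3] <;> ring
theorem inner_cross_cross (u v w z : E3) :
    ⟪cross u v, cross w z⟫ = ⟪u, w⟫ * ⟪v, z⟫ - ⟪u, z⟫ * ⟪v, w⟫ := by
  simp [cross0, cross1, cross2, inner3]; ring

theorem frame_exp (a p z : E3) (haa : ⟪a, a⟫ = 1) (hpp : ⟪p, p⟫ = 1) (hap : ⟪a, p⟫ = 0) :
    z = ⟪z, a⟫ • a + ⟪z, p⟫ • p + ⟪z, cross a p⟫ • cross a p := by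
  have hpa : ⟪p, a⟫ = 0 := by rw [real_inner_comm]; exact hap
  have htt : ⟪cross a p, cross a p⟫ = 1 := by
    rw [inner_cross_cross, haa, hpp, hap]; ring
  have h1 : cross (cross a p) z = ⟪z, a⟫ • p - ⟪z, p⟫ • a := by
    rw [cross_anti, cross_cross3]; module
  have h2 : cross (cross a p) a = p := by
    rw [cross_anti, cross_cross3, haa, hap]; module
  have h3 : cross (cross a p) p = -a := by
    rw [cross_anti, cross_cross3, hpp, hpa]; module
  have h4 := cross_cross3 (cross a p) (cross a p) z
  rw [h1, htt, sub_eq_add_neg, cross_addr, cross_negr, cross_smulr, cross_smulr, h2, h3,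
    real_inner_comm z (cross a p)] at h4
  linear_combination (norm := module) h4

theorem cross_hasDerivAt {f g : ℝ → E3} {f' g' : E3} {s : ℝ} (hf : HasDerivAt f f' s)
    (hg : HasDerivAt g g' s) :
    HasDerivAt (fun s => cross (f s) (g s)) (cross f' (g s) + cross (f s) g') s := by
  have hf' := fun i => (hasDerivAt_euclidean.1 hf) i
  have hg' := fun i => (hasDerivAt_euclidean.1 hg) i
  rw [hasDerivAt_euclidean]
  intro i
  fin_cases i
  · exact (((hf' 1).mul (hg' 2)).sub ((hf' 2).mul (hg' 1))).congr_deriv (by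
      simp [cross0]; ring)
  · exact (((hf' 2).mul (hg' 0)).sub ((hf' 0).mul (hg' 2))).congr_deriv (by
      simp [cross1]; ring)
  · exact (((hf' 0).mul (hg' 1)).sub ((hf' 1).mul (hg' 0))).congr_deriv (by
      simp [cross2]; ring)

theorem alg (a b p q x y : E3) (k T₀ T₁ : ℝ)
    (haa : ⟪a, a⟫ = 1) (hpp : ⟪p, p⟫ = 1) (hap : ⟪a, p⟫ = 0) (hab : ⟪a, b⟫ = 0)
    (hpq : ⟪p, q⟫ = 0) (haq : ⟪a, q⟫ + ⟪b, p⟫ = 0)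
    (hax : ⟪a, x⟫ = -1) (hpx : ⟪p, x⟫ = 0) (hpy : ⟪p, y⟫ + ⟪x, q⟫ = 0)
    (hay : ⟪a, y⟫ + ⟪b, x⟫ = -k)
    (hT₀ : T₀ = ⟪x, cross a p⟫)
    (hT₁ : T₁ = ⟪x, cross a q + cross b p⟫ + ⟪y, cross a p⟫) :
    x = -a + T₀ • cross a p ∧
    y = -(k • a) - b + T₀ • (cross a q + cross b p) + T₁ • cross a p ∧
    cross p p + cross a x = -(T₀ • p) ∧
    (cross p q + cross a y) + (cross (k • p + q) p + cross b x) = -(T₀ • q) - T₁ • p := by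
  have hx : x = -a + T₀ • cross a p := by
    have := frame_exp a p x haa hpp hap
    rw [real_inner_comm, hax, real_inner_comm, hpx, ← hT₀] at this
    rw [this]; module
  have e1 : ⟪b, x⟫ = T₀ * ⟪b, cross a p⟫ := by
    rw [hx, inner_add_right, inner_neg_right, inner_smul_right, real_inner_comm, hab]; ring
  have e2 : ⟪x, q⟫ = ⟪b, p⟫ + T₀ * ⟪q, cross a p⟫ := by
    rw [real_inner_comm, hx, inner_add_right, inner_neg_right, inner_smul_right,
      real_inner_comm]; linarith
  have ta : ⟪a, cross a q + cross b p⟫ = - ⟪b, cross a p⟫ := by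
    simp [cross0, cross1, cross2, inner3]; ring
  have tp : ⟪p, cross a q + cross b p⟫ = - ⟪q, cross a p⟫ := by
    simp [cross0, cross1, cross2, inner3]; ring
  have tt : ⟪cross a p, cross a q + cross b p⟫ = 0 := by
    rw [inner_add_right, inner_cross_cross, inner_cross_cross, hpq, real_inner_comm a p, hap, hab]
    ring
  have ca : ⟪a, cross a p⟫ = 0 := by
    simp [cross0, cross1, cross2, inner3]; ring
  have cp : ⟪p, cross a p⟫ = 0 := by
    simp [cross0, cross1, cross2, inner3]; ring
  have cc : ⟪cross a p, cross a p⟫ = 1 := by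
    rw [inner_cross_cross, haa, hpp, hap]; ring
  have ext : ⟪x, cross a q + cross b p⟫ = ⟪b, cross a p⟫ := by
    rw [hx, inner_add_left, inner_neg_left, inner_smul_left, tt, ta]; simp
  have hy : y = -(k • a) - b + T₀ • (cross a q + cross b p) + T₁ • cross a p := by
    have hb := frame_exp a p b haa hpp hap
    have ht := frame_exp a p (cross a q + cross b p) haa hpp hap
    have hy := frame_exp a p y haa hpp hap
    rw [real_inner_comm, hab] at hb
    rw [real_inner_comm a, ta, real_inner_comm p, tp, real_inner_comm (cross a p) (cross a q + cross b p), tt] at ht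
    have y1 : ⟪y, a⟫ = -k - T₀ * ⟪b, cross a p⟫ := by rw [real_inner_comm]; linarith
    have y2 : ⟪y, p⟫ = -⟪b, p⟫ - T₀ * ⟪q, cross a p⟫ := by rw [real_inner_comm]; linarith
    have y3 : ⟪y, cross a p⟫ = T₁ - ⟪b, cross a p⟫ := by linarith
    rw [y1, y2, y3] at hy
    linear_combination (norm := module) hy + hb - T₀ • ht
  have cat : cross a (cross a p) = -p := by
    rw [cross_cross3, haa, hap]; module
  refine ⟨hx, hy, ?_, ?_⟩
  · rw [cross_self3, hx, cross_addr, cross_negr, cross_smulr, cross_self3, cat]; module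
  · have h1 : cross a y = -cross a b + T₀ • cross a (cross a q + cross b p) - T₁ • p := by
      rw [hy, cross_addr, cross_addr, sub_eq_add_neg, cross_addr, cross_negr, cross_negr,
        cross_smulr, cross_smulr, cross_smulr, cross_self3, cat]; module
    have h2 : cross b x = cross a b + T₀ • cross b (cross a p) := by
      rw [hx, cross_addr, cross_negr, cross_smulr, cross_anti b a]; module
    have h3 : cross a (cross a q + cross b p) + cross b (cross a p) = -q := by
      rw [cross_addr, cross_cross3, cross_cross3, cross_cross3, haa, hap, hab,
        real_inner_comm a b, hab]
      have : ⟪a, q⟫ = -⟪b, p⟫ := by linarith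
      rw [this]; module
    rw [h1, h2, cross_addl, cross_smull, cross_self3, cross_anti p q]
    linear_combination (norm := module) T₀ • h3

/-- The dual Frenet formula for an arc-length parametrized non-cylindrical ruled surface,
written out in its real and ε-components. -/
theorem dual_frenet_formula
    (I : Set ℝ) (v₀ v₁ : ℝ → E3)
    (hI : IsOpen I) (hI' : I.OrdConnected)
    (hv₀ : ContDiffOn ℝ (⊤ : ℕ∞) v₀ I) (hv₁ : ContDiffOn ℝ (⊤ : ℕ∞) v₁ I)
    (hunit : ∀ s ∈ I, ‖v₀ s‖ = 1) (horth : ∀ s ∈ I, ⟪v₀ s, v₁ s⟫ = 0)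
    (harc : ∀ s ∈ I, ‖deriv v₀ s‖ = 1) :
    ∀ s ∈ I,
      deriv v₀ s = n₀ v₀ s ∧
      deriv v₁ s = κ₁ v₀ v₁ s • n₀ v₀ s + n₁ v₀ v₁ s ∧
      deriv (n₀ v₀) s = -v₀ s + τ₀ v₀ s • t₀ v₀ s ∧
      deriv (n₁ v₀ v₁) s =
        -(κ₁ v₀ v₁ s • v₀ s) - v₁ s + τ₀ v₀ s • t₁ v₀ v₁ s + τ₁ v₀ v₁ s • t₀ v₀ s ∧
      deriv (t₀ v₀) s = -(τ₀ v₀ s • n₀ v₀ s) ∧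
      deriv (t₁ v₀ v₁) s = -(τ₀ v₀ s • n₁ v₀ v₁ s) - τ₁ v₀ v₁ s • n₀ v₀ s := by
  have d0 : ∀ s ∈ I, HasDerivAt v₀ (n₀ v₀ s) s := fun s hs =>
    ((hv₀.differentiableOn (by simp)).differentiableAt (hI.mem_nhds hs)).hasDerivAt
  have d1' : ∀ s ∈ I, HasDerivAt v₁ (deriv v₁ s) s := fun s hs =>
    ((hv₁.differentiableOn (by simp)).differentiableAt (hI.mem_nhds hs)).hasDerivAt
  have e1 : ∀ s, deriv v₁ s = κ₁ v₀ v₁ s • n₀ v₀ s + n₁ v₀ v₁ s := fun s => by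
    simp [n₁, n₀]
  have d1 : ∀ s ∈ I, HasDerivAt v₁ (κ₁ v₀ v₁ s • n₀ v₀ s + n₁ v₀ v₁ s) s := fun s hs =>
    e1 s ▸ d1' s hs
  have dd0 : ∀ s ∈ I, DifferentiableAt ℝ (deriv v₀) s := fun s hs =>
    ((hv₀.deriv_of_isOpen (m := 1) hI (WithTop.coe_le_coe.2 (le_top : (1 + 1 : ℕ∞) ≤ ⊤))).differentiableOn
      (by simp)).differentiableAt (hI.mem_nhds hs)
  have dd1 : ∀ s ∈ I, DifferentiableAt ℝ (deriv v₁) s := fun s hs =>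
    ((hv₁.deriv_of_isOpen (m := 1) hI (WithTop.coe_le_coe.2 (le_top : (1 + 1 : ℕ∞) ≤ ⊤))).differentiableOn
      (by simp)).differentiableAt (hI.mem_nhds hs)
  have dn0 : ∀ s ∈ I, HasDerivAt (n₀ v₀) (deriv (n₀ v₀) s) s := fun s hs =>
    (dd0 s hs).hasDerivAt
  have dn1 : ∀ s ∈ I, HasDerivAt (n₁ v₀ v₁) (deriv (n₁ v₀ v₁) s) s := fun s hs =>
    ((dd1 s hs).sub (((dd0 s hs).inner ℝ (dd1 s hs)).smul (dd0 s hs))).hasDerivAt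
  have key : ∀ (f : ℝ → ℝ) (f' c : ℝ), (∀ s ∈ I, f s = c) → ∀ s ∈ I,
      HasDerivAt f f' s → f' = 0 := fun f f' c hc s hs hf => by
    refine hf.unique ((hasDerivAt_const s c).congr_of_eventuallyEq ?_)
    filter_upwards [hI.mem_nhds hs] with u hu using hc u hu
  have haa : ∀ s ∈ I, ⟪v₀ s, v₀ s⟫ = 1 := fun s hs => by
    rw [real_inner_self_eq_norm_sq, hunit s hs]; norm_num
  have hpp : ∀ s ∈ I, ⟪n₀ v₀ s, n₀ v₀ s⟫ = 1 := fun s hs => by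
    rw [real_inner_self_eq_norm_sq, n₀, harc s hs]; norm_num
  have hap : ∀ s ∈ I, ⟪v₀ s, n₀ v₀ s⟫ = 0 := fun s hs => by
    have := key _ _ _ haa s hs ((d0 s hs).inner ℝ (d0 s hs))
    rw [real_inner_comm (v₀ s)] at this
    linarith
  have hpq : ∀ s ∈ I, ⟪n₀ v₀ s, n₁ v₀ v₁ s⟫ = 0 := fun s hs => by
    have h := hpp s hs
    simp only [n₀] at h
    simp only [n₀, n₁, κ₁, inner_sub_right, inner_smul_right, h]; ring
  have haq : ∀ s ∈ I, ⟪v₀ s, n₁ v₀ v₁ s⟫ + ⟪v₁ s, n₀ v₀ s⟫ = 0 := fun s hs => by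
    have := key _ _ _ horth s hs ((d0 s hs).inner ℝ (d1 s hs))
    rw [inner_add_right, inner_smul_right, hap s hs, real_inner_comm (v₁ s)] at this
    linarith
  intro s hs
  have hax : ⟪v₀ s, deriv (n₀ v₀) s⟫ = -1 := by
    have := key _ _ _ hap s hs ((d0 s hs).inner ℝ (dn0 s hs))
    rw [hpp s hs] at this
    linarith
  have hpx : ⟪n₀ v₀ s, deriv (n₀ v₀) s⟫ = 0 := by
    have := key _ _ _ hpp s hs ((dn0 s hs).inner ℝ (dn0 s hs))
    rw [real_inner_comm (n₀ v₀ s)] at this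
    linarith
  have hpy := key _ _ _ hpq s hs ((dn0 s hs).inner ℝ (dn1 s hs))
  have hay : ⟪v₀ s, deriv (n₁ v₀ v₁) s⟫ + ⟪v₁ s, deriv (n₀ v₀) s⟫ = -κ₁ v₀ v₁ s := by
    have := key _ _ _ haq s hs
      (((d0 s hs).inner ℝ (dn1 s hs)).add ((d1 s hs).inner ℝ (dn0 s hs)))
    rw [inner_add_left, inner_smul_left, hpp s hs, real_inner_comm (n₀ v₀ s) (n₁ v₀ v₁ s),
      hpq s hs] at this
    simp at this
    linarith
  obtain ⟨h1, h2, h3, h4⟩ := alg (v₀ s) (v₁ s) (n₀ v₀ s) (n₁ v₀ v₁ s) (deriv (n₀ v₀) s)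
    (deriv (n₁ v₀ v₁) s) (κ₁ v₀ v₁ s) (τ₀ v₀ s) (τ₁ v₀ v₁ s) (haa s hs) (hpp s hs) (hap s hs)
    (horth s hs) (hpq s hs) (haq s hs) hax hpx hpy hay rfl rfl
  refine ⟨rfl, e1 s, h1, h2, ?_, ?_⟩
  · exact (cross_hasDerivAt (d0 s hs) (dn0 s hs)).deriv.trans h3
  · exact ((cross_hasDerivAt (d0 s hs) (dn1 s hs)).add
      (cross_hasDerivAt (d1 s hs) (dn0 s hs))).deriv.trans h4
end
end

section
/- Under the standing hypotheses, the curve σ(s) = r(s) − ⟪r'(s), e'(s)⟫·e(s) satisfies ⟪σ'(s), e'(s)⟫ = 0 for all s ∈ I (the defining property of the striction curve of the ruled surface). -/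
noncomputable section
open scoped RealInnerProductSpace

open Ruled

/-- The curve `σ(s) = r(s) - ⟪r'(s), e'(s)⟫ • e(s)` satisfies `⟪σ'(s), e'(s)⟫ = 0`,
the defining property of the striction curve. -/
theorem striction_curve_defining_property
    (I : Set ℝ) (v₀ v₁ : ℝ → E3)
    (hI : IsOpen I) (hI' : I.OrdConnected)
    (hv₀ : ContDiffOn ℝ (⊤ : ℕ∞) v₀ I) (hv₁ : ContDiffOn ℝ (⊤ : ℕ∞) v₁ I)
    (hunit : ∀ s ∈ I, ‖v₀ s‖ = 1) (horth : ∀ s ∈ I, ⟪v₀ s, v₁ s⟫ = 0)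
    (harc : ∀ s ∈ I, ‖deriv v₀ s‖ = 1) :
    ∀ s ∈ I, ⟪deriv (strict v₀ v₁) s, deriv (e v₀) s⟫ = 0 := by
  intro s hs
  have hr : ContDiffOn ℝ (⊤ : ℕ∞) (r v₀ v₁) I := by
    rw [contDiffOn_euclidean] at hv₀ hv₁ ⊢
    intro i
    fin_cases i
    · exact ((hv₀ 1).mul (hv₁ 2)).sub ((hv₀ 2).mul (hv₁ 1))
    · exact ((hv₀ 2).mul (hv₁ 0)).sub ((hv₀ 0).mul (hv₁ 2))
    · exact ((hv₀ 0).mul (hv₁ 1)).sub ((hv₀ 1).mul (hv₁ 0))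
  have hmem : I ∈ nhds s := hI.mem_nhds hs
  have key : ∀ f : ℝ → E3, ContDiffOn ℝ (⊤ : ℕ∞) f I →
      DifferentiableAt ℝ f s ∧ DifferentiableAt ℝ (deriv f) s := by
    intro f hf
    refine ⟨(hf.differentiableOn (by simp)).differentiableAt hmem, ?_⟩
    have h1 : ContDiffOn ℝ 1 (deriv f) I :=
      hf.deriv_of_isOpen hI (WithTop.coe_le_coe.mpr (le_top : (1 + 1 : ℕ∞) ≤ ⊤))
    exact (h1.differentiableOn (by simp)).differentiableAt hmem
  obtain ⟨h0, h0'⟩ := key v₀ hv₀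
  obtain ⟨hr0, hr0'⟩ := key _ hr
  have hc : DifferentiableAt ℝ (fun s => ⟪deriv (r v₀ v₁) s, deriv v₀ s⟫) s :=
    hr0'.inner ℝ h0'
  have hd : HasDerivAt (strict v₀ v₁) _ s :=
    hr0.hasDerivAt.sub (hc.hasDerivAt.smul h0.hasDerivAt)
  have hperp : ⟪v₀ s, deriv v₀ s⟫ = 0 := by
    have h1 : HasDerivAt (fun t => ⟪v₀ t, v₀ t⟫) _ s := h0.hasDerivAt.inner ℝ h0.hasDerivAt
    have h2 : HasDerivAt (fun t => ⟪v₀ t, v₀ t⟫) 0 s := by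
      refine (hasDerivAt_const s (1 : ℝ)).congr_of_eventuallyEq ?_
      filter_upwards [hmem] with t ht
      rw [real_inner_self_eq_norm_sq, hunit t ht]; norm_num
    have h3 := h1.unique h2
    rw [real_inner_comm (v₀ s) (deriv v₀ s)] at h3
    rw [real_inner_comm] at h3 ⊢
    linarith
  have hn : ⟪deriv v₀ s, deriv v₀ s⟫ = 1 := by
    rw [real_inner_self_eq_norm_sq, harc s hs]; norm_num
  rw [hd.deriv]
  simp only [e, inner_sub_left, inner_add_left, real_inner_smul_left, hperp, hn]
  ring
end
end

section
/- Assume in addition that κ₁(s) = 0 for all s ∈ I (the ruled surface is developable). Then the unit vector field ν(s) = e(s) × e'(s) (note |e(s) × e'(s)| = 1 since |e| = |e'| = 1 and ⟪e, e'⟫ = 0) is normal to the surface everywhere: ⟪(∂F/∂s)(s,t), ν(s)⟫ = 0 and ⟪(∂F/∂t)(s,t), ν(s)⟫ = 0 for all (s,t) ∈ I × ℝ. In particular, F is a frontal map. -/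
noncomputable section
open scoped RealInnerProductSpace

open Ruled

theorem aux_cross_deriv {a b : ℝ → E3} {a' b' : E3} {s : ℝ}
    (ha : HasDerivAt a a' s) (hb : HasDerivAt b b' s) :
    HasDerivAt (fun u => cross (a u) (b u)) (cross a' (b s) + cross (a s) b') s := by
  have pa : ∀ i, HasDerivAt (fun u => a u i) (a' i) s := fun i =>
    ((EuclideanSpace.proj i : E3 →L[ℝ] ℝ).hasFDerivAt.comp_hasDerivAt s ha)
  have pb : ∀ i, HasDerivAt (fun u => b u i) (b' i) s := fun i =>
    ((EuclideanSpace.proj i : E3 →L[ℝ] ℝ).hasFDerivAt.comp_hasDerivAt s hb)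
  have key : ∀ i, HasDerivAt (fun u => cross (a u) (b u) i)
      ((cross a' (b s) + cross (a s) b') i) s := by
    intro i
    fin_cases i
    · refine HasDerivAt.congr_deriv (((pa 1).mul (pb 2)).sub ((pa 2).mul (pb 1))) ?_
      simp [cross]; ring
    · refine HasDerivAt.congr_deriv (((pa 2).mul (pb 0)).sub ((pa 0).mul (pb 2))) ?_
      simp [cross]; ring
    · refine HasDerivAt.congr_deriv (((pa 0).mul (pb 1)).sub ((pa 1).mul (pb 0))) ?_
      simp [cross]; ring
  have h := hasDerivAt_pi.2 key
  exact ((EuclideanSpace.equiv (Fin 3) ℝ).symm.toContinuousLinearMap.hasFDerivAt).comp_hasDerivAt s h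

theorem aux_lagrange (a b c d : E3) :
    ⟪cross a b, cross c d⟫ = ⟪a, c⟫ * ⟪b, d⟫ - ⟪a, d⟫ * ⟪b, c⟫ := by
  simp [cross, PiLp.inner_apply, Fin.sum_univ_three]; ring

theorem aux_perp_left (a b : E3) : ⟪a, cross a b⟫ = 0 := by
  simp [cross, PiLp.inner_apply, Fin.sum_univ_three]; ring

theorem aux_perp_right (a b : E3) : ⟪b, cross a b⟫ = 0 := by
  simp [cross, PiLp.inner_apply, Fin.sum_univ_three]; ring

/-- For a non-cylindrical developable surface, `ν = e × e'` is a unit vector field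
normal to both partial derivatives of `F`; in particular `F` is a frontal map. -/
theorem developable_is_frontal
    (I : Set ℝ) (v₀ v₁ : ℝ → E3)
    (hI : IsOpen I) (hI' : I.OrdConnected)
    (hv₀ : ContDiffOn ℝ (⊤ : ℕ∞) v₀ I) (hv₁ : ContDiffOn ℝ (⊤ : ℕ∞) v₁ I)
    (hunit : ∀ s ∈ I, ‖v₀ s‖ = 1) (horth : ∀ s ∈ I, ⟪v₀ s, v₁ s⟫ = 0)
    (harc : ∀ s ∈ I, ‖deriv v₀ s‖ = 1)
    (hdev : ∀ s ∈ I, κ₁ v₀ v₁ s = 0) :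
    ∀ s ∈ I,
      ‖cross (e v₀ s) (deriv (e v₀) s)‖ = 1 ∧
      ∀ t : ℝ,
        ⟪deriv (fun u => F v₀ v₁ u t) s, cross (e v₀ s) (deriv (e v₀) s)⟫ = 0 ∧
        ⟪deriv (fun u => F v₀ v₁ s u) t, cross (e v₀ s) (deriv (e v₀) s)⟫ = 0 := by
  intro s hs
  have hn : I ∈ nhds s := hI.mem_nhds hs
  have d0 : HasDerivAt v₀ (deriv v₀ s) s :=
    ((hv₀.contDiffAt hn).differentiableAt (by simp)).hasDerivAt
  have d1 : HasDerivAt v₁ (deriv v₁ s) s :=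
    ((hv₁.contDiffAt hn).differentiableAt (by simp)).hasDerivAt
  have hperp : ⟪v₀ s, deriv v₀ s⟫ = 0 := by
    have h1 := d0.inner ℝ d0
    have h2 : (fun u => ⟪v₀ u, v₀ u⟫) =ᶠ[nhds s] fun _ => (1 : ℝ) := by
      filter_upwards [hn] with u hu
      rw [real_inner_self_eq_norm_sq, hunit u hu]; norm_num
    have h3 := h1.unique ((hasDerivAt_const s (1 : ℝ)).congr_of_eventuallyEq h2)
    rw [real_inner_comm (v₀ s) (deriv v₀ s)] at h3
    have h4 := real_inner_comm (v₀ s) (deriv v₀ s)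
    linarith
  have hu := real_inner_self_eq_norm_sq (v₀ s)
  rw [hunit s hs] at hu
  have ha := real_inner_self_eq_norm_sq (deriv v₀ s)
  rw [harc s hs] at ha
  have ho := horth s hs
  have hk := hdev s hs
  have hr := aux_cross_deriv d0 d1
  simp only [κ₁] at hk
  have dF : ∀ t : ℝ, HasDerivAt (fun u => F v₀ v₁ u t)
      (cross (deriv v₀ s) (v₁ s) + cross (v₀ s) (deriv v₁ s) + t • deriv v₀ s) s :=
    fun t => hr.add (d0.const_smul t)
  have dT : ∀ t : ℝ, HasDerivAt (fun u => F v₀ v₁ s u) (v₀ s) t := by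
    intro t
    have := ((hasDerivAt_id t).smul_const (v₀ s)).const_add (r v₀ v₁ s)
    simpa [F] using this
  simp only [e]
  refine ⟨?_, fun t => ⟨?_, ?_⟩⟩
  · have h := aux_lagrange (v₀ s) (deriv v₀ s) (v₀ s) (deriv v₀ s)
    rw [hu, ha, hperp, real_inner_self_eq_norm_sq] at h
    have h0 := norm_nonneg (cross (v₀ s) (deriv v₀ s))
    nlinarith
  · rw [(dF t).deriv, inner_add_left, inner_add_left, inner_smul_left, aux_lagrange, aux_lagrange,
      aux_perp_right, real_inner_comm, hperp, real_inner_comm (v₀ s) (v₁ s), ho,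
      real_inner_comm (deriv v₀ s) (deriv v₁ s), hk]
    simp
  · rw [(dT t).deriv, aux_perp_left]
end
end

section
/- For a unit dual quaternion q̌ = q₀ + ε q₁, define Θ(q̌) : Im ℍ → Im ℍ by Θ(q̌)(x) = q₀ x q̄₀ + 2 q₁ q̄₀. Then: (a) for any two unit dual quaternions p̌ = p₀ + ε p₁ and q̌ = q₀ + ε q₁, the product p̌ q̌ is a unit dual quaternion and Θ(p̌ q̌)(x) = Θ(p̌)(Θ(q̌)(x)) for every pure imaginary x; and (b) Θ(q̌) is an isometry: |Θ(q̌)(x) − Θ(q̌)(y)| = |x − y| for all pure imaginary x, y. -/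
noncomputable section

open TrivSqZeroExt

/-- The action `Θ(q̌)(x) = q₀ x q̄₀ + 2 q₁ q̄₀` of a unit dual quaternion `q̌ = q₀ + ε q₁`
on pure imaginary quaternions. -/
def Theta (q₀ q₁ x : Quaternion ℝ) : Quaternion ℝ :=
  q₀ * x * star q₀ + 2 * (q₁ * star q₀)

/-- (a) The product of two unit dual quaternions is a unit dual quaternion and
`Θ(p̌ q̌) = Θ(p̌) ∘ Θ(q̌)` on pure imaginary quaternions; (b) `Θ(q̌)` is an isometry. -/
theorem unit_dual_quaternion_group_action_isometry (p₀ p₁ q₀ q₁ : Quaternion ℝ)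
    (hp : p₀ * star p₀ = 1) (hp' : p₀ * star p₁ + p₁ * star p₀ = 0)
    (hq : q₀ * star q₀ = 1) (hq' : q₀ * star q₁ + q₁ * star q₀ = 0) :
    (∀ w : DualNumber (Quaternion ℝ),
        w = (inl p₀ + inr p₁ : DualNumber (Quaternion ℝ)) * (inl q₀ + inr q₁) →
          w.fst * star w.fst = 1 ∧
          w.fst * star w.snd + w.snd * star w.fst = 0 ∧
          ∀ x : Quaternion ℝ, x.re = 0 →
            Theta w.fst w.snd x = Theta p₀ p₁ (Theta q₀ q₁ x)) ∧
      (∀ x y : Quaternion ℝ, x.re = 0 → y.re = 0 →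
        ‖Theta q₀ q₁ x - Theta q₀ q₁ y‖ = ‖x - y‖) := by
  have hn : ‖q₀‖ = 1 := by
    have h := congrArg norm hq
    rw [norm_mul, norm_star, norm_one] at h
    nlinarith [norm_nonneg q₀]
  have c : ∀ a : Quaternion ℝ, q₀ * (star q₀ * a) = a := fun a => by
    rw [← mul_assoc, hq, one_mul]
  refine ⟨?_, ?_⟩
  · rintro w rfl
    have h1 : ((inl p₀ + inr p₁ : DualNumber (Quaternion ℝ)) * (inl q₀ + inr q₁)).fst
        = p₀ * q₀ := by simp
    have h2 : ((inl p₀ + inr p₁ : DualNumber (Quaternion ℝ)) * (inl q₀ + inr q₁)).snd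
        = p₀ * q₁ + p₁ * q₀ := by simp
    rw [h1, h2]
    refine ⟨?_, ?_, ?_⟩
    · rw [star_mul, mul_assoc, c, hp]
    · have e : p₀ * q₀ * star (p₀ * q₁ + p₁ * q₀) + (p₀ * q₁ + p₁ * q₀) * star (p₀ * q₀)
          = p₀ * (q₀ * star q₁ + q₁ * star q₀) * star p₀
            + (p₀ * star p₁ + p₁ * star p₀) := by
        simp only [star_add, star_mul, mul_add, add_mul, mul_assoc, c]
        abel
      rw [e, hq', hp']
      simp
    · intro x _
      simp only [Theta, star_mul, two_mul, mul_add, add_mul, mul_assoc, c]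
      abel
  · intro x y _ _
    have e : Theta q₀ q₁ x - Theta q₀ q₁ y = q₀ * (x - y) * star q₀ := by
      simp only [Theta, mul_sub, sub_mul]
      abel
    rw [e, norm_mul, norm_mul, norm_star, hn, one_mul, mul_one]
end
end

section
/- (Canonical Taylor expansion at a singular point.) Assume 0 ∈ I and the normalization v₀(0) = (1,0,0), v₀'(0) = (0,1,0), v₁(0) = 0 and v₁'(0) = 0 (so that κ₁(0) = 0, v₌(0), n₀(0), t₀(0) are the standard basis vectors, v₁(0) = n₁(0) = t₁(0) = 0, and F is singular at (0,0) with F(0,0) = 0). Let P : ℝ² → ℝ³ be the cubic polynomial map P(s,t) = ( t − (1/2)t s² + (τ₁(0)/2) s³ , t s − (τ₁(0)/2) s² − ((2 τ₀(0) κ₁'(0) + τ₁'(0))/6) s³ , (κ₁'(0)/2) s² + (τ₀(0)/2) t s² + ((κ₁''(0) − 2 τ₀(0) τ₁(0))/6) s³ ). Then F(s,t) − P(s,t) = o(‖(s,t)‖³) as (s,t) → (0,0); that is, the degree-3 Taylor polynomial of F at (0,0) equals P. -/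
noncomputable section
open scoped RealInnerProductSpace

open Ruled

open Asymptotics


lemma hd_coord {f : ℝ → E3} {f' : E3} {x : ℝ} :
    HasDerivAt f f' x ↔ ∀ i, HasDerivAt (fun y => f y i) (f' i) x := by
  rw [← hasDerivWithinAt_univ, hasDerivWithinAt_iff_hasFDerivWithinAt, hasFDerivWithinAt_euclidean]
  refine forall_congr' fun i => ?_
  rw [← hasDerivWithinAt_univ, hasDerivWithinAt_iff_hasFDerivWithinAt]
  have : PiLp.proj 2 (fun _ : Fin 3 => ℝ) i ∘L ContinuousLinearMap.toSpanSingleton ℝ f' =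
      ContinuousLinearMap.toSpanSingleton ℝ (f' i) := by
    ext; simp
  rw [← this]

lemma hd_cross {f g : ℝ → E3} {f' g' : E3} {x : ℝ} (hf : HasDerivAt f f' x)
    (hg : HasDerivAt g g' x) :
    HasDerivAt (fun y => cross (f y) (g y)) (cross (f x) g' + cross f' (g x)) x := by
  rw [hd_coord] at *
  intro i
  fin_cases i
  · refine (((hf 1).mul (hg 2)).sub ((hf 2).mul (hg 1))).congr_deriv ?_
    simp [cross]; ring
  · refine (((hf 2).mul (hg 0)).sub ((hf 0).mul (hg 2))).congr_deriv ?_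
    simp [cross]; ring
  · refine (((hf 0).mul (hg 1)).sub ((hf 1).mul (hg 0))).congr_deriv ?_
    simp [cross]; ring

lemma cd_step {f : ℝ → E3} {I : Set ℝ} (hI : IsOpen I) (hf : ContDiffOn ℝ (⊤ : ℕ∞) f I) :
    (∀ s ∈ I, HasDerivAt f (deriv f s) s) ∧ ContDiffOn ℝ (⊤ : ℕ∞) (deriv f) I := by
  obtain ⟨h1, h2⟩ := (contDiffOn_infty_iff_deriv_of_isOpen hI).1 hf
  exact ⟨fun s hs => ((h1 s hs).differentiableAt (hI.mem_nhds hs)).hasDerivAt, h2⟩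

lemma lo_step {f f' : ℝ → E3} {I : Set ℝ} {n : ℕ} (hI : IsOpen I) (hI' : I.OrdConnected)
    (h0 : (0 : ℝ) ∈ I) (hf : ∀ s ∈ I, HasDerivAt f (f' s) s) (hz : f 0 = 0)
    (ho : f' =o[nhds 0] fun s : ℝ => s ^ n) : f =o[nhds 0] fun s : ℝ => s ^ (n + 1) := by
  have := Convex.isLittleO_pow_succ_real (f := f) (f' := f') (n := n) (x₀ := 0) hI'.convex h0
    (fun s hs => (hf s hs).hasDerivWithinAt) (by simpa [hI.nhdsWithin_eq h0] using ho)
  simpa [hI.nhdsWithin_eq h0, hz] using this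

lemma tay1 {f : ℝ → E3} {c : E3} (h : HasDerivAt f c 0) :
    (fun s => f s - f 0 - s • c) =o[nhds 0] fun s : ℝ => s ^ 1 := by
  simpa using h.isLittleO

lemma tay2 {f f1 : ℝ → E3} {c : E3} {I : Set ℝ} (hI : IsOpen I) (hI' : I.OrdConnected)
    (h0 : (0 : ℝ) ∈ I) (hf : ∀ s ∈ I, HasDerivAt f (f1 s) s) (h : HasDerivAt f1 c 0) :
    (fun s => f s - f 0 - s • f1 0 - (s ^ 2 / 2) • c) =o[nhds 0] fun s : ℝ => s ^ 2 := by
  refine lo_step hI hI' h0 (fun s hs => ?_) (by simp) (tay1 h)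
  refine (((hf s hs).sub_const (f 0)).sub ((hasDerivAt_id s).smul_const (f1 0))).sub
    ((((hasDerivAt_id s).pow 2).div_const 2).smul_const c) |>.congr_deriv ?_
  simp

lemma tay3 {f f1 f2 : ℝ → E3} {c : E3} {I : Set ℝ} (hI : IsOpen I) (hI' : I.OrdConnected)
    (h0 : (0 : ℝ) ∈ I) (hf : ∀ s ∈ I, HasDerivAt f (f1 s) s)
    (hf1 : ∀ s ∈ I, HasDerivAt f1 (f2 s) s) (h : HasDerivAt f2 c 0) :
    (fun s => f s - f 0 - s • f1 0 - (s ^ 2 / 2) • f2 0 - (s ^ 3 / 6) • c)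
      =o[nhds 0] fun s : ℝ => s ^ 3 := by
  refine lo_step hI hI' h0 (fun s hs => ?_) (by simp) (tay2 hI hI' h0 hf1 h)
  refine ((((hf s hs).sub_const (f 0)).sub ((hasDerivAt_id s).smul_const (f1 0))).sub
    ((((hasDerivAt_id s).pow 2).div_const 2).smul_const (f2 0))).sub
    ((((hasDerivAt_id s).pow 3).div_const 6).smul_const c) |>.congr_deriv ?_
  have : (3 * s ^ 2 / 6 : ℝ) = s ^ 2 / 2 := by ring
  simp [this]

lemma eq_deriv {f : ℝ → ℝ} {f' : ℝ → ℝ} {I : Set ℝ} (hI : IsOpen I) (c : ℝ)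
    (hf : ∀ s ∈ I, f s = c) (hd : ∀ s ∈ I, HasDerivAt f (f' s) s) : ∀ s ∈ I, f' s = 0 := by
  intro s hs
  have : f =ᶠ[nhds s] fun _ => c := by
    filter_upwards [hI.mem_nhds hs] with y hy using hf y hy
  exact (hd s hs).unique ((hasDerivAt_const s c).congr_of_eventuallyEq this)

lemma inner_coord (x y : E3) : ⟪x, y⟫ = x 0 * y 0 + x 1 * y 1 + x 2 * y 2 := by
  simp [PiLp.inner_apply, Fin.sum_univ_three]; ring

/-- The canonical Taylor expansion of `F` at a normalized singular point: the degree-3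
Taylor polynomial of `F` at `(0,0)` is the cubic map `P` built from the invariants. -/
theorem canonical_taylor_expansion
    (I : Set ℝ) (v₀ v₁ : ℝ → E3)
    (hI : IsOpen I) (hI' : I.OrdConnected)
    (hv₀ : ContDiffOn ℝ (⊤ : ℕ∞) v₀ I) (hv₁ : ContDiffOn ℝ (⊤ : ℕ∞) v₁ I)
    (hunit : ∀ s ∈ I, ‖v₀ s‖ = 1) (horth : ∀ s ∈ I, ⟪v₀ s, v₁ s⟫ = 0)
    (harc : ∀ s ∈ I, ‖deriv v₀ s‖ = 1)
    (h0 : (0 : ℝ) ∈ I)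
    (hn₁ : v₀ 0 = EuclideanSpace.single 0 1)
    (hn₂ : deriv v₀ 0 = EuclideanSpace.single 1 1)
    (hn₃ : v₁ 0 = 0) (hn₄ : deriv v₁ 0 = 0) :
    (fun p : ℝ × ℝ =>
        F v₀ v₁ p.1 p.2 -
          (WithLp.equiv 2 (Fin 3 → ℝ)).symm
            ![p.2 - (1 / 2) * p.2 * p.1 ^ 2 + (τ₁ v₀ v₁ 0 / 2) * p.1 ^ 3,
              p.2 * p.1 - (τ₁ v₀ v₁ 0 / 2) * p.1 ^ 2 -
                ((2 * τ₀ v₀ 0 * deriv (κ₁ v₀ v₁) 0 + deriv (τ₁ v₀ v₁) 0) / 6) * p.1 ^ 3,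
              (deriv (κ₁ v₀ v₁) 0 / 2) * p.1 ^ 2 + (τ₀ v₀ 0 / 2) * p.2 * p.1 ^ 2 +
                ((deriv (deriv (κ₁ v₀ v₁)) 0 - 2 * τ₀ v₀ 0 * τ₁ v₀ v₁ 0) / 6) * p.1 ^ 3]) =o[nhds (0 : ℝ × ℝ)]
      fun p : ℝ × ℝ => ‖p‖ ^ 3 := by
  obtain ⟨hA0, cA1⟩ := cd_step hI hv₀
  obtain ⟨hA1, cA2⟩ := cd_step hI cA1
  obtain ⟨hA2, cA3⟩ := cd_step hI cA2
  obtain ⟨hB0, cB1⟩ := cd_step hI hv₁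
  obtain ⟨hB1, cB2⟩ := cd_step hI cB1
  obtain ⟨hB2, cB3⟩ := cd_step hI cB2
  have hmem : ∀ᶠ s in nhds (0 : ℝ), s ∈ I := hI.mem_nhds h0
  -- constraints
  have c1 := eq_deriv hI 1 (f := fun s => ⟪v₀ s, v₀ s⟫)
    (fun s hs => by simp [hunit s hs]) (fun s hs => (hA0 s hs).inner ℝ (hA0 s hs))
  have c2 := eq_deriv hI 0 c1 (fun s hs =>
    ((hA0 s hs).inner ℝ (hA1 s hs)).add ((hA1 s hs).inner ℝ (hA0 s hs))) 0 h0
  have c3 := eq_deriv hI 1 (f := fun s => ⟪deriv v₀ s, deriv v₀ s⟫)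
    (fun s hs => by simp [harc s hs]) (fun s hs => (hA1 s hs).inner ℝ (hA1 s hs)) 0 h0
  have c4 := eq_deriv hI 0 (f := fun s => ⟪v₀ s, v₁ s⟫)
    horth (fun s hs => (hA0 s hs).inner ℝ (hB0 s hs))
  have c5 := eq_deriv hI 0 c4 (fun s hs =>
    ((hA0 s hs).inner ℝ (hB1 s hs)).add ((hA1 s hs).inner ℝ (hB0 s hs))) 0 h0
  -- kappa
  have k1 : ∀ s ∈ I, HasDerivAt (κ₁ v₀ v₁) (⟪deriv v₀ s, deriv (deriv v₁) s⟫ +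
      ⟪deriv (deriv v₀) s, deriv v₁ s⟫) s := fun s hs => (hA1 s hs).inner ℝ (hB1 s hs)
  have k1d : deriv (κ₁ v₀ v₁) =ᶠ[nhds 0] fun s => ⟪deriv v₀ s, deriv (deriv v₁) s⟫ +
      ⟪deriv (deriv v₀) s, deriv v₁ s⟫ := by
    filter_upwards [hmem] with s hs using (k1 s hs).deriv
  have k1' := ((hA1 0 h0).inner ℝ (hB2 0 h0)).add ((hA2 0 h0).inner ℝ (hB1 0 h0))
  have k2 := k1'.congr_of_eventuallyEq k1d
  -- n₁
  have n1 : ∀ s ∈ I, HasDerivAt (n₁ v₀ v₁) (deriv (deriv v₁) s -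
      (κ₁ v₀ v₁ s • deriv (deriv v₀) s + (⟪deriv v₀ s, deriv (deriv v₁) s⟫ +
      ⟪deriv (deriv v₀) s, deriv v₁ s⟫) • deriv v₀ s)) s := fun s hs =>
    (hB1 s hs).sub ((k1 s hs).smul (hA1 s hs))
  have n1d : deriv (n₁ v₀ v₁) =ᶠ[nhds 0] fun s => deriv (deriv v₁) s -
      (κ₁ v₀ v₁ s • deriv (deriv v₀) s + (⟪deriv v₀ s, deriv (deriv v₁) s⟫ +
      ⟪deriv (deriv v₀) s, deriv v₁ s⟫) • deriv v₀ s) := by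
    filter_upwards [hmem] with s hs using (n1 s hs).deriv
  have n2 := ((hB2 0 h0).sub (((k1 0 h0).smul (hA2 0 h0)).add
    (k1'.smul (hA1 0 h0)))).congr_of_eventuallyEq n1d
  -- torsion
  have ht0 : HasDerivAt (t₀ v₀) _ 0 := hd_cross (hA0 0 h0) (hA1 0 h0)
  have ht1 : HasDerivAt (t₁ v₀ v₁) _ 0 :=
    (hd_cross (hA0 0 h0) (n1 0 h0)).add (hd_cross (hB0 0 h0) (hA1 0 h0))
  have ht : HasDerivAt (τ₁ v₀ v₁) _ 0 :=
    (HasDerivAt.inner ℝ (hA2 0 h0) ht1).add (HasDerivAt.inner ℝ n2 ht0)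
  have eτ1 := ht.deriv
  have eκ2 := k2.deriv
  have eκ1 := (k1 0 h0).deriv
  have eτ0v : τ₀ v₀ 0 = deriv (deriv v₀) 0 2 := by
    change ⟪deriv (deriv v₀) 0, cross (v₀ 0) (deriv v₀ 0)⟫ = _
    rw [hn₁, hn₂, inner_coord]; simp [cross]
  have en1 := n1d.self_of_nhds
  have eκ0 : κ₁ v₀ v₁ 0 = 0 := by simp [κ₁, hn₄]
  have en0 : n₁ v₀ v₁ 0 = 0 := by simp [n₁, hn₄, eκ0]
  have et0 : t₀ v₀ 0 = EuclideanSpace.single 2 1 := by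
    ext i; fin_cases i <;> simp [t₀, n₀, cross, hn₁, hn₂]
  have et1 : t₁ v₀ v₁ 0 = 0 := by
    ext i; fin_cases i <;> simp [t₁, n₀, en0, cross, hn₁, hn₂, hn₃]
  have eτ1v : τ₁ v₀ v₁ 0 = deriv (deriv v₁) 0 2 := by
    change ⟪_, t₁ v₀ v₁ 0⟫ + ⟪deriv (n₁ v₀ v₁) 0, t₀ v₀ 0⟫ = _
    rw [et1, en1, et0]; simp [inner_coord, hn₂, eκ0]
  rw [en1] at eτ1
  simp only [inner_coord, et0, et1, en0, eκ0, hn₁, hn₂, hn₃, hn₄] at c2 c3 c5 eκ1 eκ2 eτ1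
  simp [cross] at c2 c3 c5 eκ1 eκ2 eτ1
  have c2' : (deriv (deriv v₀) 0) 0 = -1 := by linarith
  have hn0 : n₀ v₀ 0 = EuclideanSpace.single 1 1 := hn₂
  -- Taylor expansions
  have T0 := tay2 hI hI' h0 hA0 (hA1 0 h0)
  have R1 : ∀ s ∈ I, HasDerivAt (r v₀ v₁) _ s := fun s hs => hd_cross (hA0 s hs) (hB0 s hs)
  have R2 := fun s (hs : s ∈ I) =>
    (hd_cross (hA0 s hs) (hB1 s hs)).add (hd_cross (hA1 s hs) (hB0 s hs))
  have R3 := ((hd_cross (hA0 0 h0) (hB2 0 h0)).add (hd_cross (hA1 0 h0) (hB1 0 h0))).add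
    ((hd_cross (hA1 0 h0) (hB1 0 h0)).add (hd_cross (hA2 0 h0) (hB0 0 h0)))
  have T1 := tay3 hI hI' h0 R1 R2 R3
  have f1 : Filter.Tendsto (Prod.fst : ℝ × ℝ → ℝ) (nhds 0) (nhds 0) :=
    continuous_fst.tendsto' _ _ rfl
  have b1 : (fun p : ℝ × ℝ => p.1) =O[nhds 0] fun p : ℝ × ℝ => ‖p‖ :=
    IsBigO.of_bound 1 (.of_forall fun p => by simpa using norm_fst_le p)
  have b2 : (fun p : ℝ × ℝ => p.2) =O[nhds 0] fun p : ℝ × ℝ => ‖p‖ :=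
    IsBigO.of_bound 1 (.of_forall fun p => by simpa using norm_snd_le p)
  have U0 := (T0.comp_tendsto f1).trans_isBigO (b1.pow 2)
  have U1 := (T1.comp_tendsto f1).trans_isBigO (b1.pow 3)
  have U2 := U1.add ((b2.smul_isLittleO U0).congr_right (g₂ := fun p : ℝ × ℝ => ‖p‖ ^ 3)
    (fun p => by simp; ring))
  refine U2.congr_left fun p => ?_
  rw [eτ0v, eτ1v, eκ1, eκ2, eτ1]
  ext i
  fin_cases i
  · simp [F, r, cross, hn₁, hn₂, hn₃, hn₄, hn0, c2', c3, c5]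
    ring
  · simp [F, r, cross, hn₁, hn₂, hn₃, hn₄, hn0, c2', c3, c5]
    ring
  · simp [F, r, cross, hn₁, hn₂, hn₃, hn₄, hn0, c2', c3, c5]
    ring
end
end
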